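/- arXiv:1701.02250 — 4 statements merged into one kernel-verified Lean document; each statement's English description precedes it below -/
import Mathlib

section
/- Let J be a small category and C a category having all limits of shape J. Then Fam C has all limits of shape J. (In particular, if C has pullbacks then Fam C has pullbacks.) -/
open CategoryTheory Limits

universe v u

/-- The free coproduct completion of `C`: objects are families of objects of `C`
indexed by a type. -/
structure Fam (C : Type u) [Category.{v} C] : Type (max u 1) where
  idx : Type
  fam : idx → C

namespace Fam

variable {C : Type u} [Category.{v} C]

/-- Morphisms in `Fam C`. -/
structure Hom (X Y : Fam C) : Type v where
  base : X.idx → Y.idx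
  fiber : ∀ i, X.fam i ⟶ Y.fam (base i)

instance : Category.{v} (Fam C) where
  Hom X Y := Hom X Y
  id X := ⟨fun i => i, fun i => 𝟙 (X.fam i)⟩
  comp f g := ⟨fun i => g.base (f.base i), fun i => f.fiber i ≫ g.fiber (f.base i)⟩
  id_comp f := by cases f; simp
  comp_id f := by cases f; simp
  assoc f g h := by cases f; cases g; cases h; simp

end Fam

/-- The singleton embedding `σ : C ⥤ Fam C`. -/
def famSingleton (C : Type u) [Category.{v} C] : C ⥤ Fam C where
  obj X := ⟨PUnit, fun _ => X⟩
  map u := ⟨fun i => i, fun _ => u⟩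
  map_id _ := rfl
  map_comp _ _ := rfl

/-!
A diagram of families has an underlying diagram of index types, and over each point of a cone on
the latter its members form a diagram in `C`. A limit in `Fam C` is therefore computed in two
stages: the index type is the limit of the index types, and the member at a point of this limit is
the limit of the diagram lying over that point. The only obstacle is that indices agree just
propositionally, so components of morphisms are compared after transport along such equalities.
-/

universe w₁ w₂

namespace Fam

section Fiber

variable {C : Type u} [Category.{v} C] {X Y Z : Fam C}

/-- The component at `i` of a morphism `f` of families, with codomain transported along
`Hom.base f i = k`. Stating composition laws for these transported components avoids
equalities between morphisms whose codomains are only propositionally equal. -/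
def fiberOfEq (f : X ⟶ Y) {i : X.idx} {k : Y.idx} (h : Hom.base f i = k) :
    X.fam i ⟶ Y.fam k :=
  Hom.fiber f i ≫ eqToHom (congrArg Y.fam h)

theorem fiberOfEq_rfl (f : X ⟶ Y) (i : X.idx) :
    fiberOfEq f (rfl : Hom.base f i = _) = Hom.fiber f i :=
  Category.comp_id _

theorem fiberOfEq_eq_id {p : X ⟶ X} (hp : p = 𝟙 X) {i : X.idx} (h : Hom.base p i = i) :
    fiberOfEq p h = 𝟙 (X.fam i) := by
  subst hp
  exact fiberOfEq_rfl (𝟙 X) i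

theorem fiberOfEq_comp {f : X ⟶ Y} {g : Y ⟶ Z} {p : X ⟶ Z} (w : f ≫ g = p)
    {i : X.idx} {j : Y.idx} {k : Z.idx}
    (hf : Hom.base f i = j) (hg : Hom.base g j = k) (hp : Hom.base p i = k) :
    fiberOfEq f hf ≫ fiberOfEq g hg = fiberOfEq p hp := by
  subst w hf hg
  rw [fiberOfEq_rfl, fiberOfEq_rfl]
  exact (fiberOfEq_rfl (f ≫ g) i).symm

theorem hom_ext {f g : X ⟶ Y} (hbase : ∀ i, Hom.base f i = Hom.base g i)
    (hfiber : ∀ i, fiberOfEq f (hbase i) = Hom.fiber g i) : f = g := by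
  obtain ⟨b, φ⟩ := f
  obtain ⟨b', φ'⟩ := g
  obtain rfl : b = b' := funext hbase
  obtain rfl : φ = φ' := funext fun i => (fiberOfEq_rfl (Y := Y) ⟨b, φ⟩ i).symm.trans (hfiber i)
  rfl

end Fiber

/-- The functor sending a family to its index type. -/
def indexFunctor (C : Type u) [Category.{v} C] : Fam C ⥤ Type where
  obj X := X.idx
  map f := ↾(Hom.base f)

section Limit

variable {C : Type u} [Category.{v} C] {J : Type w₁} [Category.{w₂} J] {F : J ⥤ Fam C}

/-- The index in `F.obj j` to which a point of a cone on the index types projects. The type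
`(F.obj j).idx` is only definitionally equal to the codomain `(F ⋙ indexFunctor C).obj j` of the
leg, and naming this function keeps the two from being confused in rewriting. -/
def indexLeg (c : Cone (F ⋙ indexFunctor C)) (j : J) (x : c.pt) : (F.obj j).idx :=
  c.π.app j x

theorem base_map_indexLeg (c : Cone (F ⋙ indexFunctor C)) (x : c.pt) {j k : J} (f : j ⟶ k) :
    Hom.base (F.map f) (indexLeg c j x) = indexLeg c k x :=
  ConcreteCategory.congr_hom (c.w f) x

/-- The diagram in `C` that a diagram of families induces over a point `x` of a cone on its index
types: at `j` it is the member of `F.obj j` indexed by the `j`-th projection of `x`. -/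
def fiberDiagram (c : Cone (F ⋙ indexFunctor C)) (x : c.pt) : J ⥤ C where
  obj j := (F.obj j).fam (indexLeg c j x)
  map f := fiberOfEq (F.map f) (base_map_indexLeg c x f)
  map_id j := fiberOfEq_eq_id (F.map_id j) _
  map_comp f g := (fiberOfEq_comp (F.map_comp f g).symm _ _ _).symm

variable {c : Cone (F ⋙ indexFunctor C)}

/-- The vertex of `totalCone`. It is reducible so that its indices are recognised as points of
`c`. -/
abbrev totalPt (d : ∀ x, Cone (fiberDiagram c x)) : Fam C :=
  ⟨c.pt, fun x => (d x).pt⟩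

/-- The legs of `totalCone`. -/
def totalProj (d : ∀ x, Cone (fiberDiagram c x)) (j : J) : totalPt d ⟶ F.obj j :=
  Hom.mk (indexLeg c j) fun x => (d x).π.app j

theorem fiberOfEq_totalProj (d : ∀ x, Cone (fiberDiagram c x)) (j : J) (x : c.pt) :
    fiberOfEq (totalProj d j) (rfl : Hom.base _ x = indexLeg c j x) = (d x).π.app j :=
  fiberOfEq_rfl (totalProj d j) x

theorem totalProj_comp_map (d : ∀ x, Cone (fiberDiagram c x)) {j k : J} (f : j ⟶ k) :
    totalProj d j ≫ F.map f = totalProj d k := by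
  refine hom_ext (base_map_indexLeg c · f) fun x => ?_
  have hcomp := fiberOfEq_comp (f := totalProj d j) rfl (rfl : _ = indexLeg c j x)
    (base_map_indexLeg c x f) (base_map_indexLeg c x f)
  rw [fiberOfEq_totalProj] at hcomp
  exact hcomp.symm.trans ((d x).w f)

/-- The cone of families assembled from a cone of index types and a cone `d` on the fiber diagram
over each of its points. -/
def totalCone (d : ∀ x, Cone (fiberDiagram c x)) : Cone F where
  pt := totalPt d
  π :=
    { app := totalProj d
      naturality := fun _ _ f => (Category.id_comp _).trans (totalProj_comp_map d f).symm }

/-- The cone in `C` at an index `i` of the vertex of a cone `s` of families, over a point `x` with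
the same projections as `i`. -/
def fiberCone (s : Cone F) (i : s.pt.idx) {x : c.pt}
    (h : ∀ j, Hom.base (s.π.app j) i = indexLeg c j x) : Cone (fiberDiagram c x) where
  pt := s.pt.fam i
  π :=
    { app := fun j => fiberOfEq (s.π.app j) (h j)
      naturality := fun j k f => (Category.id_comp _).trans
        (fiberOfEq_comp (s.w f) (h j) (base_map_indexLeg c x f) (h k)).symm }

variable {d : ∀ x, Cone (fiberDiagram c x)}

theorem base_π_eq_indexLeg_lift (hc : IsLimit c) (s : Cone F) (i : s.pt.idx) (j : J) :
    Hom.base (s.π.app j) i = indexLeg c j (hc.lift ((indexFunctor C).mapCone s) i) :=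
  (ConcreteCategory.congr_hom (hc.fac ((indexFunctor C).mapCone s) j) i).symm

/-- The morphism induced by a cone `s` into the total cone: on indices it is the lift to the
limit of index types, and on members the lift of the fiber cones of `s`. -/
def totalLift (hc : IsLimit c) (hd : ∀ x, IsLimit (d x)) (s : Cone F) : s.pt ⟶ totalPt d :=
  Hom.mk (Y := totalPt d) (hc.lift ((indexFunctor C).mapCone s))
    fun i => (hd _).lift (fiberCone s i (base_π_eq_indexLeg_lift hc s i))

theorem totalLift_comp_totalProj (hc : IsLimit c) (hd : ∀ x, IsLimit (d x)) (s : Cone F) (j : J) :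
    totalLift hc hd s ≫ totalProj d j = s.π.app j :=
  Eq.symm <| hom_ext (base_π_eq_indexLeg_lift hc s · j) fun i =>
    ((hd _).fac (fiberCone s i (base_π_eq_indexLeg_lift hc s i)) j).symm

theorem fiberOfEq_comp_π {X : Fam C} {m : X ⟶ totalPt d} {j : J} {p : X ⟶ F.obj j}
    (w : m ≫ totalProj d j = p) {i : X.idx} {x : c.pt} (hm : Hom.base m i = x)
    (hp : Hom.base p i = indexLeg c j x) :
    fiberOfEq m hm ≫ (d x).π.app j = fiberOfEq p hp := by
  rw [← fiberOfEq_totalProj]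
  exact fiberOfEq_comp w hm rfl hp

theorem eq_totalLift (hc : IsLimit c) (hd : ∀ x, IsLimit (d x)) (s : Cone F)
    (m : s.pt ⟶ totalPt d) (w : ∀ j, m ≫ totalProj d j = s.π.app j) : m = totalLift hc hd s := by
  have hbase : (indexFunctor C).map m = hc.lift ((indexFunctor C).mapCone s) :=
    hc.uniq ((indexFunctor C).mapCone s) _ fun j => congrArg (indexFunctor C).map (w j)
  exact hom_ext (ConcreteCategory.congr_hom hbase) fun i =>
    (hd _).uniq (fiberCone s i (base_π_eq_indexLeg_lift hc s i)) _ fun j =>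
      fiberOfEq_comp_π (w j) (ConcreteCategory.congr_hom hbase i) (base_π_eq_indexLeg_lift hc s i j)

/-- The total cone of limit cones is a limit cone. -/
def isLimitTotalCone (hc : IsLimit c) (hd : ∀ x, IsLimit (d x)) : IsLimit (totalCone d) where
  lift := totalLift hc hd
  fac := totalLift_comp_totalProj hc hd
  uniq := eq_totalLift hc hd

end Limit

end Fam

theorem Fam.hasLimitsOfShape_general (C : Type u) [Category.{v} C] (J : Type w₁) [Category.{w₂} J]
    [HasLimitsOfShape J Type] [HasLimitsOfShape J C] : HasLimitsOfShape J (Fam C) where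
  has_limit F := ⟨⟨_, Fam.isLimitTotalCone (limit.isLimit (F ⋙ Fam.indexFunctor C))
    fun x => limit.isLimit (Fam.fiberDiagram _ x)⟩⟩

theorem Fam.hasLimitsOfShape (C : Type u) [Category.{v} C] (J : Type) [SmallCategory J]
    [HasLimitsOfShape J C] : HasLimitsOfShape J (Fam C) := by
  exact Fam.hasLimitsOfShape_general C J
end

section
/- Let C be a category. An object (I, F) of Fam C is connected if and only if I has exactly one element (i.e., I is nonempty and a subsingleton). -/
/-!
`Hom(X, -)` preserves the coproduct of `f` exactly when every morphism from `X` to that coproduct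
factors through precisely one coprojection, in one way. In `Fam C` such a morphism factors through
the `j`-th coprojection iff its map of index types lands in the `j`-th summand, and coprojections
are monic. If `X` has exactly one index, the summand is therefore determined by the image of that
index. Conversely, `X` maps canonically to the coproduct of its members, sending each index to a
different summand; if this morphism factors through a single summand, there is exactly one index.
-/

open CategoryTheory Limits

universe v u

/-- An object `X` is connected if `Hom(X, -)` preserves all small coproducts. -/
def IsConnectedObj {D : Type u} [Category.{v} D] (X : D) : Prop :=
  ∀ (J : Type), PreservesColimitsOfShape (Discrete J) (coyoneda.obj (Opposite.op X))

theorem preservesColimit_coyoneda_iff_bijective {D : Type u} [Category.{v} D] (X : D) {J : Type*}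
    {f : J → D} {c : Cofan f} (hc : IsColimit c) :
    PreservesColimit (Discrete.functor f) (coyoneda.obj (Opposite.op X)) ↔
      Function.Bijective fun p : Σ j, X ⟶ f j => p.2 ≫ c.inj p.1 := by
  let F := coyoneda.obj (Opposite.op X)
  calc
    PreservesColimit (Discrete.functor f) F ↔ Nonempty (IsColimit (F.mapCocone c)) :=
      ⟨fun _ => ⟨isColimitOfPreserves F hc⟩,
        fun ⟨h⟩ => preservesColimit_of_preserves_colimit_cocone hc h⟩
    _ ↔ Nonempty (IsColimit (Cofan.mk (F.obj c.pt) fun j => F.map (c.inj j))) :=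
      (Cofan.isColimitMapCoconeEquiv F f c).nonempty_congr
    _ ↔ Function.Bijective fun p : Σ j, X ⟶ f j => p.2 ≫ c.inj p.1 :=
      Cofan.nonempty_isColimit_iff_bijective_fromSigma _

namespace Fam

variable {C : Type u} [Category.{v} C]

section Coproduct

variable {J : Type} (f : J → Fam C)

/-- The coproduct of the families `f j` in `Fam C`: their concatenation, indexed by the disjoint
union of their index types. -/
def sigma : Fam C :=
  ⟨Σ j, (f j).idx, fun p => (f p.1).fam p.2⟩

/-- The coprojection of `f j` into the coproduct `sigma f`. -/
def sigmaι (j : J) : f j ⟶ sigma f :=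
  Hom.mk (Y := sigma f) (fun i => ⟨j, i⟩) fun i => 𝟙 ((f j).fam i)

variable {f}

/-- The copairing `sigma f ⟶ Y` of morphisms `f j ⟶ Y`. -/
def sigmaDesc {Y : Fam C} (g : ∀ j, f j ⟶ Y) : sigma f ⟶ Y :=
  Hom.mk (fun p => (g p.1).base p.2) fun p => (g p.1).fiber p.2

theorem sigmaι_comp_sigmaDesc {Y : Fam C} (g : ∀ j, f j ⟶ Y) (j : J) :
    sigmaι f j ≫ sigmaDesc g = g j :=
  congrArg (Hom.mk (g j).base) (funext fun _ => Category.id_comp _)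

theorem sigmaDesc_sigmaι_comp {Y : Fam C} (m : sigma f ⟶ Y) :
    sigmaDesc (fun j => sigmaι f j ≫ m) = m :=
  congrArg (Hom.mk m.base) (funext fun _ => Category.id_comp _)

variable (f) in
/-- The coprojections `sigmaι f j` exhibit `sigma f` as the categorical coproduct of `f`. -/
def sigmaIsColimit : IsColimit (Cofan.mk (sigma f) (sigmaι f)) :=
  Cofan.IsColimit.mk _ (fun t => sigmaDesc t.inj) (fun t => sigmaι_comp_sigmaDesc t.inj)
    fun _ m hm => (sigmaDesc_sigmaι_comp m).symm.trans (congrArg sigmaDesc (funext hm))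

instance mono_sigmaι (j : J) : Mono (sigmaι f j) where
  right_cancellation := by
    rintro X ⟨b, φ⟩ ⟨b', φ'⟩ h
    obtain ⟨hbase, hfiber⟩ := Hom.mk.inj h
    have hb (i : X.idx) : (⟨j, b i⟩ : Σ j, (f j).idx) = ⟨j, b' i⟩ := congrFun hbase i
    obtain rfl : b = b' := funext fun i => eq_of_heq (Sigma.mk.inj (hb i)).2
    have hφ (i : X.idx) : φ i ≫ 𝟙 _ = φ' i ≫ 𝟙 _ := congrFun (eq_of_heq hfiber) i
    exact congrArg (Hom.mk b) (funext fun i => by simpa only [Category.comp_id] using hφ i)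

theorem exists_comp_sigmaι_eq_iff {X : Fam C} (h : X ⟶ sigma f) (j : J) :
    (∃ g, g ≫ sigmaι f j = h) ↔ ∀ i, (h.base i).1 = j := by
  constructor
  · rintro ⟨g, rfl⟩ i
    rfl
  · obtain ⟨b, φ⟩ := h
    intro hb
    have hlift : ∀ i, ∃ k, (⟨j, k⟩ : Σ j, (f j).idx) = b i := by
      intro i
      obtain rfl := hb i
      exact ⟨(b i).2, rfl⟩
    choose k hk using hlift
    -- Once `b` is literally `fun i => ⟨j, k i⟩`, the fiber maps `φ` need no transport.
    obtain rfl : (fun i => ⟨j, k i⟩) = b := funext hk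
    exact ⟨Hom.mk k φ, congrArg (Hom.mk _) (funext fun _ => Category.comp_id _)⟩

theorem injective_comp_sigmaι (X : Fam C) [Nonempty X.idx] :
    Function.Injective fun p : Σ j, X ⟶ f j => p.2 ≫ sigmaι f p.1 := by
  rintro ⟨j, g⟩ ⟨j', g'⟩ (h : g ≫ sigmaι f j = g' ≫ sigmaι f j')
  obtain ⟨i⟩ := ‹Nonempty X.idx›
  obtain rfl : j' = j := (exists_comp_sigmaι_eq_iff _ j).1 ⟨g, h⟩ i
  rw [(cancel_mono _).1 h]

theorem surjective_comp_sigmaι (X : Fam C) [Nonempty X.idx] [Subsingleton X.idx] :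
    Function.Surjective fun p : Σ j, X ⟶ f j => p.2 ≫ sigmaι f p.1 := by
  intro h
  obtain ⟨i⟩ := ‹Nonempty X.idx›
  obtain ⟨g, hg⟩ := (exists_comp_sigmaι_eq_iff h (h.base i).1).2
    fun i' => by rw [Subsingleton.elim i' i]
  exact ⟨⟨_, g⟩, hg⟩

end Coproduct

/-- The canonical morphism from a family to the coproduct of its members, viewed as singleton
families. -/
def toSigmaSingleton (X : Fam C) : X ⟶ sigma fun i => (famSingleton C).obj (X.fam i) :=
  Hom.mk (fun i => ⟨i, PUnit.unit⟩) fun i => 𝟙 (X.fam i)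

theorem isConnectedObj_iff_bijective (X : Fam C) :
    IsConnectedObj X ↔ ∀ (J : Type) (f : J → Fam C),
      Function.Bijective fun p : Σ j, X ⟶ f j => p.2 ≫ sigmaι f p.1 := by
  have preserves_iff (J : Type) (f : J → Fam C) :=
    preservesColimit_coyoneda_iff_bijective X (sigmaIsColimit f)
  constructor
  · intro hX J f
    have := hX J
    exact (preserves_iff J f).1 inferInstance
  · intro hX J
    have (f : J → Fam C) := (preserves_iff J f).2 (hX J f)
    exact preservesColimitsOfShape_of_discrete _

end Fam

theorem Fam.connected_iff (C : Type u) [Category.{v} C] (X : Fam C) :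
    IsConnectedObj X ↔ (Nonempty X.idx ∧ Subsingleton X.idx) := by
  rw [Fam.isConnectedObj_iff_bijective]
  constructor
  · intro hX
    obtain ⟨⟨j, g⟩, hg⟩ := (hX X.idx _).surjective X.toSigmaSingleton
    have eq_j : ∀ i, i = j := (Fam.exists_comp_sigmaι_eq_iff X.toSigmaSingleton j).1 ⟨g, hg⟩
    exact ⟨⟨j⟩, ⟨fun a b => (eq_j a).trans (eq_j b).symm⟩⟩
  · rintro ⟨_, _⟩ J f
    exact ⟨Fam.injective_comp_sigmaι X, Fam.surjective_comp_sigmaι X⟩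
end

section
/- For any category C, the category Fam C is finitary extensive: it has finite coproducts, and binary coproduct cocones are van Kampen (coproducts are disjoint and universal). -/
open CategoryTheory Limits

universe v u

/-!
A coproduct inclusion in `Fam C` is, up to isomorphism of its source, the inclusion of the
subfamily indexed by a subset, and its pullback along a morphism is the subfamily indexed by the
preimage of that subset. A binary cofan is therefore a coproduct exactly when its legs are such
inclusions and the two subsets are complementary. As taking preimages preserves complements, both
sides of the van Kampen condition say that the legs of the upper cofan are inclusions whose index
sets are the preimages of those of the lower one.
-/

theorem isCompl_iff_eq_and_eq_of_le {α : Type*} [DistribLattice α] [BoundedOrder α]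
    {a a' b b' : α} (h' : IsCompl a' b') (ha : a ≤ a') (hb : b ≤ b') :
    IsCompl a b ↔ a = a' ∧ b = b' := by
  refine ⟨fun h => ⟨ha.antisymm ?_, hb.antisymm ?_⟩, fun ⟨ha_eq, hb_eq⟩ => ha_eq ▸ hb_eq ▸ h'⟩
  · exact h.symm.Antitone h'.symm hb
  · exact h.Antitone h' ha

namespace Fam

variable {C : Type u} [Category.{v} C]

section Hom

variable {W X Y Z : Fam C}

theorem hom_ext_s14 {f g : X ⟶ Y} (hbase : ∀ i, f.base i = g.base i)
    (hfiber : ∀ i, f.fiber i ≫ eqToHom (congrArg Y.fam (hbase i)) = g.fiber i) : f = g := by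
  obtain ⟨fbase, ffiber⟩ := f
  obtain ⟨gbase, gfiber⟩ := g
  obtain rfl : fbase = gbase := funext hbase
  obtain rfl : ffiber = gfiber := funext fun i => by simpa using hfiber i
  rfl

theorem congr_base {f g : X ⟶ Y} (h : f = g) (i : X.idx) : f.base i = g.base i := by
  rw [h]

theorem congr_fiber {f g : X ⟶ Y} (h : f = g) (i : X.idx) :
    f.fiber i ≫ eqToHom (congrArg Y.fam (congr_base h i)) = g.fiber i := by
  subst h
  simp

@[simp]
theorem id_fiber (i : X.idx) : Hom.fiber (𝟙 X) i = 𝟙 (X.fam i) := rfl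

@[simp]
theorem comp_base (f : X ⟶ Y) (g : Y ⟶ Z) (i : X.idx) :
    (f ≫ g).base i = g.base (f.base i) := rfl

@[simp]
theorem comp_fiber (f : X ⟶ Y) (g : Y ⟶ Z) (i : X.idx) :
    (f ≫ g).fiber i = f.fiber i ≫ g.fiber (f.base i) := rfl

/-- The morphisms isomorphic to the inclusion of a subfamily: injective on indices and invertible
on fibers. -/
structure IsInclusion (f : X ⟶ Y) : Prop where
  injective : Function.Injective f.base
  isIso_fiber : ∀ i, IsIso (f.fiber i)

namespace IsInclusion

theorem comp {f : X ⟶ Y} {g : Y ⟶ Z} (hf : IsInclusion f) (hg : IsInclusion g) :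
    IsInclusion (f ≫ g) where
  injective := hg.injective.comp hf.injective
  isIso_fiber i :=
    have := hf.isIso_fiber i
    have := hg.isIso_fiber (f.base i)
    IsIso.comp_isIso' ‹_› ‹_›

theorem mono {f : X ⟶ Y} (hf : IsInclusion f) : Mono f where
  right_cancellation g h e := by
    have hbase (i) : g.base i = h.base i := hf.injective (congr_base e i)
    refine hom_ext_s14 hbase fun i => ?_
    have := hf.isIso_fiber (h.base i)
    rw [← cancel_mono (f.fiber (h.base i)), Category.assoc,
      ← eqToHom_naturality f.fiber (hbase i)]
    simpa using congr_fiber e i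

theorem exists_comp_eq {f : X ⟶ Y} (hf : IsInclusion f) (g : W ⟶ Y)
    (hg : ∀ i, g.base i ∈ Set.range f.base) : ∃ k : W ⟶ X, k ≫ f = g := by
  choose b hb using hg
  have := hf.isIso_fiber
  refine ⟨⟨b, fun i => g.fiber i ≫ eqToHom (congrArg Y.fam (hb i).symm) ≫
    inv (f.fiber (b i))⟩, hom_ext_s14 hb fun i => ?_⟩
  simp

end IsInclusion

theorem bijective_base (f : X ⟶ Y) [IsIso f] : Function.Bijective f.base :=
  Function.bijective_iff_has_inverse.2 ⟨(inv f).base,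
    congr_base (IsIso.hom_inv_id f), congr_base (IsIso.inv_hom_id f)⟩

instance isIso_fiber (f : X ⟶ Y) [IsIso f] (i : X.idx) : IsIso (f.fiber i) := by
  have hbase : (inv f).base (f.base i) = i := congr_base (IsIso.hom_inv_id f) i
  refine ⟨(inv f).fiber (f.base i) ≫ eqToHom (congrArg X.fam hbase), ?_, ?_⟩
  · simpa using congr_fiber (IsIso.hom_inv_id f) i
  · rw [Category.assoc, ← eqToHom_naturality f.fiber hbase]
    simpa using congr_fiber (IsIso.inv_hom_id f) (f.base i)

theorem isIso_iff_isInclusion_and_surjective (f : X ⟶ Y) :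
    IsIso f ↔ IsInclusion f ∧ Function.Surjective f.base := by
  refine ⟨fun _ => ⟨⟨(bijective_base f).1, inferInstance⟩, (bijective_base f).2⟩, ?_⟩
  rintro ⟨hf, hsurj⟩
  obtain ⟨k, hk⟩ := hf.exists_comp_eq (𝟙 Y) hsurj
  have := hf.mono
  exact ⟨k, by rw [← cancel_mono f, Category.assoc, hk, Category.comp_id, Category.id_comp], hk⟩

end Hom

section Coproduct

variable {X Y Z : Fam C}

/-- The disjoint union of two families. -/
abbrev sum (X Y : Fam C) : Fam C := ⟨X.idx ⊕ Y.idx, Sum.elim X.fam Y.fam⟩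

/-- The left coproduct injection. -/
def sumInl (X Y : Fam C) : X ⟶ sum X Y := ⟨Sum.inl, fun i => 𝟙 (X.fam i)⟩

/-- The right coproduct injection. -/
def sumInr (X Y : Fam C) : Y ⟶ sum X Y := ⟨Sum.inr, fun j => 𝟙 (Y.fam j)⟩

/-- The copairing of two morphisms, by cases on the index. -/
def sumDesc (f : X ⟶ Z) (g : Y ⟶ Z) : sum X Y ⟶ Z where
  base := Sum.elim f.base g.base
  fiber
    | .inl i => f.fiber i
    | .inr j => g.fiber j

theorem sumInl_sumDesc (f : X ⟶ Z) (g : Y ⟶ Z) : sumInl X Y ≫ sumDesc f g = f :=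
  hom_ext_s14 (fun _ => rfl) fun i => by simp [sumInl, sumDesc]

theorem sumInr_sumDesc (f : X ⟶ Z) (g : Y ⟶ Z) : sumInr X Y ≫ sumDesc f g = g :=
  hom_ext_s14 (fun _ => rfl) fun j => by simp [sumInr, sumDesc]

theorem sum_hom_ext {f g : sum X Y ⟶ Z} (hl : sumInl X Y ≫ f = sumInl X Y ≫ g)
    (hr : sumInr X Y ≫ f = sumInr X Y ≫ g) : f = g := by
  refine hom_ext_s14 (Sum.rec (congr_base hl) (congr_base hr)) ?_
  rintro (i | j)
  · exact ((Category.id_comp (f.fiber (.inl i))).symm =≫ _).trans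
      ((congr_fiber hl i).trans (Category.id_comp _))
  · exact ((Category.id_comp (f.fiber (.inr j))).symm =≫ _).trans
      ((congr_fiber hr j).trans (Category.id_comp _))

/-- The universal property of the disjoint union. -/
def sumIsColimit (X Y : Fam C) : IsColimit (BinaryCofan.mk (sumInl X Y) (sumInr X Y)) :=
  BinaryCofan.isColimitMk (fun s => sumDesc s.inl s.inr)
    (fun _ => sumInl_sumDesc _ _) (fun _ => sumInr_sumDesc _ _)
    fun _ _ hl hr => sum_hom_ext (hl.trans (sumInl_sumDesc _ _).symm)
      (hr.trans (sumInr_sumDesc _ _).symm)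

theorem isInclusion_sumDesc_iff (f : X ⟶ Z) (g : Y ⟶ Z) :
    IsInclusion (sumDesc f g) ↔
      IsInclusion f ∧ IsInclusion g ∧ Disjoint (Set.range f.base) (Set.range g.base) := by
  have hinj : Function.Injective (sumDesc f g).base ↔ Function.Injective f.base ∧
      Function.Injective g.base ∧ Disjoint (Set.range f.base) (Set.range g.base) := by
    rw [Set.disjoint_range_iff]
    exact Sum.elim_injective
  have hfiber : (∀ i, IsIso ((sumDesc f g).fiber i)) ↔
      (∀ i, IsIso (f.fiber i)) ∧ ∀ j, IsIso (g.fiber j) := Sum.forall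
  constructor
  · rintro ⟨hsum, hsum'⟩
    obtain ⟨hf, hg, hdisj⟩ := hinj.1 hsum
    obtain ⟨hf', hg'⟩ := hfiber.1 hsum'
    exact ⟨⟨hf, hf'⟩, ⟨hg, hg'⟩, hdisj⟩
  · rintro ⟨⟨hf, hf'⟩, ⟨hg, hg'⟩, hdisj⟩
    exact ⟨hinj.2 ⟨hf, hg, hdisj⟩, hfiber.2 ⟨hf', hg'⟩⟩

theorem nonempty_isColimit_iff_isCompl_range (c : BinaryCofan X Y) :
    Nonempty (IsColimit c) ↔ IsInclusion c.inl ∧ IsInclusion c.inr ∧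
      IsCompl (Set.range c.inl.base) (Set.range c.inr.base) := by
  have hsurj : Function.Surjective (sumDesc c.inl c.inr).base ↔
      Codisjoint (Set.range c.inl.base) (Set.range c.inr.base) := by
    rw [codisjoint_iff, ← Set.range_eq_univ]
    exact (Set.Sum.elim_range _ _).congr_left
  rw [(sumIsColimit X Y).nonempty_isColimit_iff_isIso_desc]
  change IsIso (sumDesc c.inl c.inr) ↔ _
  rw [isIso_iff_isInclusion_and_surjective, isInclusion_sumDesc_iff, hsurj, isCompl_iff,
    and_assoc, and_assoc]

instance : HasInitial (Fam C) :=
  IsInitial.hasInitial (X := ⟨Empty, Empty.elim⟩) <|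
    IsInitial.ofUniqueHom (fun _ => ⟨Empty.elim, fun i => i.elim⟩)
      fun _ _ => hom_ext_s14 (fun i => i.elim) fun i => i.elim

instance : HasBinaryCoproducts (Fam C) :=
  have (X Y : Fam C) : HasColimit (pair X Y) := ⟨⟨⟨_, sumIsColimit X Y⟩⟩⟩
  hasBinaryCoproducts_of_hasColimit_pair (Fam C)

instance : HasFiniteCoproducts (Fam C) :=
  hasFiniteCoproducts_of_has_binary_and_initial

end Coproduct

section Pullback

variable {P A B Z : Fam C}

/-- The subfamily of `Z` indexed by a set of indices. -/
def restrict (Z : Fam C) (s : Set Z.idx) : Fam C := ⟨s, fun i => Z.fam i⟩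

/-- The inclusion of a subfamily. -/
def restrictι (Z : Fam C) (s : Set Z.idx) : restrict Z s ⟶ Z :=
  ⟨Subtype.val, fun i => 𝟙 (Z.fam i.1)⟩

theorem isInclusion_restrictι (s : Set Z.idx) : IsInclusion (restrictι Z s) :=
  ⟨Subtype.val_injective, fun i => inferInstanceAs (IsIso (𝟙 (Z.fam i.1)))⟩

theorem range_restrictι (s : Set Z.idx) : Set.range (restrictι Z s).base = s :=
  Subtype.range_val

theorem IsInclusion.isPullback_of_range_eq_preimage {fst : P ⟶ Z} {snd : P ⟶ A} {f : Z ⟶ B}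
    {g : A ⟶ B} (hg : IsInclusion g) (w : fst ≫ f = snd ≫ g) (hfst : IsInclusion fst)
    (hrange : Set.range fst.base = f.base ⁻¹' Set.range g.base) : IsPullback fst snd f g := by
  have := hg.mono
  have := hfst.mono
  have hlift (s : PullbackCone f g) : ∃ k : s.pt ⟶ P, k ≫ fst = s.fst :=
    hfst.exists_comp_eq s.fst fun i => hrange ▸ ⟨s.snd.base i, (congr_base s.condition i).symm⟩
  choose lift lift_fst using hlift
  refine ⟨⟨w⟩, ⟨PullbackCone.IsLimit.mk w lift lift_fst (fun s => ?_) fun s m hm _ => ?_⟩⟩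
  · rw [← cancel_mono g, Category.assoc, ← w, reassoc_of% lift_fst s, s.condition]
  · rw [← cancel_mono fst, hm, lift_fst]

theorem IsInclusion.exists_isPullback_restrictι {g : A ⟶ B} (hg : IsInclusion g) (f : Z ⟶ B) :
    ∃ snd, IsPullback (restrictι Z (f.base ⁻¹' Set.range g.base)) snd f g := by
  obtain ⟨snd, hsnd⟩ :=
    hg.exists_comp_eq (restrictι Z (f.base ⁻¹' Set.range g.base) ≫ f) fun i => i.2
  exact ⟨snd, hg.isPullback_of_range_eq_preimage hsnd.symm (isInclusion_restrictι _)
    (range_restrictι _)⟩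

theorem IsInclusion.isPullback_iff {fst : P ⟶ Z} {snd : P ⟶ A} {f : Z ⟶ B} {g : A ⟶ B}
    (hg : IsInclusion g) (w : fst ≫ f = snd ≫ g) :
    IsPullback fst snd f g ↔
      IsInclusion fst ∧ Set.range fst.base = f.base ⁻¹' Set.range g.base := by
  refine ⟨fun h => ?_, fun h => hg.isPullback_of_range_eq_preimage w h.1 h.2⟩
  obtain ⟨_, h'⟩ := hg.exists_isPullback_restrictι f
  let e := h.isoIsPullback _ _ h'
  rw [← h.isoIsPullback_hom_fst _ _ h']
  obtain ⟨he, hsurj⟩ := (isIso_iff_isInclusion_and_surjective e.hom).1 inferInstance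
  exact ⟨he.comp (isInclusion_restrictι _), (hsurj.range_comp _).trans (range_restrictι _)⟩

instance : HasPullbacksOfInclusions (Fam C) where
  hasPullbackInl {X Y _} f := by
    obtain ⟨hinl, -⟩ := (nonempty_isColimit_iff_isCompl_range _).1 ⟨coprodIsCoprod X Y⟩
    obtain ⟨_, h⟩ := hinl.exists_isPullback_restrictι f
    exact h.flip.hasPullback

end Pullback

end Fam

/-- The free coproduct completion of any category is finitary extensive. -/
theorem Fam.finitaryExtensive (C : Type u) [Category.{v} C] : FinitaryExtensive (Fam C) := by
  refine ⟨fun {X Y} c hc => (BinaryCofan.isVanKampen_iff c).2 fun c' αX αY f hX hY => ?_⟩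
  obtain ⟨hinl, hinr, hcompl⟩ := (nonempty_isColimit_iff_isCompl_range c).1 ⟨hc⟩
  have hl : Set.range c'.inl.base ⊆ f.base ⁻¹' Set.range c.inl.base :=
    Set.range_subset_iff.2 fun i => ⟨αX.base i, congr_base hX i⟩
  have hr : Set.range c'.inr.base ⊆ f.base ⁻¹' Set.range c.inr.base :=
    Set.range_subset_iff.2 fun i => ⟨αY.base i, congr_base hY i⟩
  have hcompl' := isCompl_iff_eq_and_eq_of_le (hcompl.preimage f.base) hl hr
  calc Nonempty (IsColimit c')
    _ ↔ IsInclusion c'.inl ∧ IsInclusion c'.inr ∧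
          IsCompl (Set.range c'.inl.base) (Set.range c'.inr.base) :=
      nonempty_isColimit_iff_isCompl_range c'
    _ ↔ (IsInclusion c'.inl ∧ Set.range c'.inl.base = f.base ⁻¹' Set.range c.inl.base) ∧
          (IsInclusion c'.inr ∧ Set.range c'.inr.base = f.base ⁻¹' Set.range c.inr.base) := by
      rw [hcompl', and_and_and_comm, and_assoc]
    _ ↔ IsPullback c'.inl αX f c.inl ∧ IsPullback c'.inr αY f c.inr :=
      ((hinl.isPullback_iff hX.symm).and (hinr.isPullback_iff hY.symm)).symm
end

section
/- Let C be a finitary extensive category. An object X of C has the property that Hom(X, −) : C ⥤ Type preserves finite coproducts if and only if for every binary coproduct decomposition X ≅ X₁ ⨿ X₂, exactly one of X₁, X₂ is not initial. -/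
open CategoryTheory Limits

universe v u

/-!
Universality of coproducts splits `X` along any `f : X ⟶ Y ⨿ Z` as a coproduct of the pullbacks
`P` and `Q` of `f` along the two injections. If exactly one of `P`, `Q` is not initial, then its
projection to `X` is an isomorphism, so `f` factors uniquely through exactly one injection.
Conversely, if `Hom(X, -)` preserves coproducts, an isomorphism `X ≅ X₁ ⨿ X₂` factors through one
injection, say that of `X₁`; then the injection of `X₂` also factors through that of `X₁`, and
disjointness makes `X₂` initial. The summands are not both initial, since `Hom(X, ⊥)` is empty.
-/

variable {C : Type u} [Category.{v} C]

section Coyoneda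

variable (X : C)

theorem preservesColimit_empty_coyoneda_iff {I : C} (hI : IsInitial I) :
    PreservesColimit (Functor.empty.{0} C) (coyoneda.obj (Opposite.op X)) ↔ IsEmpty (X ⟶ I) := by
  rw [← Types.initial_iff_empty]
  refine ⟨fun _ ↦ ⟨hI.isInitialObj (coyoneda.obj (Opposite.op X))⟩, fun ⟨h⟩ ↦ ?_⟩
  exact preservesColimit_of_preserves_colimit_cocone hI
    ((isColimitMapCoconeEmptyCoconeEquiv _ _).symm h)

theorem preservesColimit_pair_coyoneda_iff {Y Z P : C} {i : Y ⟶ P} {j : Z ⟶ P}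
    (hc : IsColimit (BinaryCofan.mk i j)) :
    PreservesColimit (pair Y Z) (coyoneda.obj (Opposite.op X)) ↔
      Function.Injective (fun a : X ⟶ Y ↦ a ≫ i) ∧ Function.Injective (fun b : X ⟶ Z ↦ b ≫ j) ∧
        IsCompl (Set.range fun a : X ⟶ Y ↦ a ≫ i) (Set.range fun b : X ⟶ Z ↦ b ≫ j) := by
  let F := coyoneda.obj (Opposite.op X)
  refine Iff.trans ?_ (Types.binaryCofan_isColimit_iff (BinaryCofan.mk (F.map i) (F.map j)))
  refine ⟨fun _ ↦ ⟨mapIsColimitOfPreservesOfIsColimit F i j hc⟩, fun ⟨h⟩ ↦ ?_⟩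
  exact preservesColimit_of_preserves_colimit_cocone hc
    ((isColimitMapCoconeBinaryCofanEquiv F i j).symm h)

end Coyoneda

theorem forall_finite_preservesColimitsOfShape_discrete_iff [HasFiniteCoproducts C]
    {D : Type*} [Category* D] (F : C ⥤ D) :
    (∀ (J : Type) [Finite J], PreservesColimitsOfShape (Discrete J) F) ↔
      PreservesColimit (Functor.empty.{0} C) F ∧ ∀ Y Z : C, PreservesColimit (pair Y Z) F := by
  refine ⟨fun h ↦ ⟨(h PEmpty).preservesColimit, fun Y Z ↦ (h WalkingPair).preservesColimit⟩, ?_⟩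
  rintro ⟨_, _⟩ J _
  have := preservesColimitsOfShape_pempty_of_preservesInitial F
  have : PreservesColimitsOfShape (Discrete WalkingPair) F :=
    ⟨fun {K} ↦ preservesColimit_of_iso_diagram F (diagramIsoPair K).symm⟩
  exact PreservesFiniteCoproducts.of_preserves_binary_and_initial F J

/-- An object is indecomposable with respect to coproducts if exactly one summand of each of its
binary coproduct decompositions is not initial. Initial objects are excluded by their decomposition
into two initial objects. -/
def IsCoprodIndecomposable [HasBinaryCoproducts C] (X : C) : Prop :=
  ∀ X₁ X₂ : C, (X ≅ X₁ ⨿ X₂) → Xor (¬ Nonempty (IsInitial X₁)) (¬ Nonempty (IsInitial X₂))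

namespace IsCoprodIndecomposable

section HasBinaryCoproducts

variable [HasBinaryCoproducts C] {X X₁ X₂ : C} {i₁ : X₁ ⟶ X} {i₂ : X₂ ⟶ X}

theorem xor_of_isColimit (hX : IsCoprodIndecomposable X)
    (hc : IsColimit (BinaryCofan.mk i₁ i₂)) :
    Xor (¬ Nonempty (IsInitial X₁)) (¬ Nonempty (IsInitial X₂)) :=
  hX X₁ X₂ (hc.coconePointUniqueUpToIso (colimit.isColimit _))

theorem not_isInitial (hX : IsCoprodIndecomposable X) : ¬ Nonempty (IsInitial X) := by
  rintro ⟨h⟩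
  obtain ⟨hc⟩ := (BinaryCofan.isColimit_iff_isIso_inl h (BinaryCofan.mk (𝟙 X) (𝟙 X))).2
    (inferInstanceAs (IsIso (𝟙 X)))
  simpa using hX.xor_of_isColimit hc

theorem isIso_inl (hX : IsCoprodIndecomposable X) (hc : IsColimit (BinaryCofan.mk i₁ i₂))
    (h₁ : ¬ Nonempty (IsInitial X₁)) : IsIso i₁ := by
  obtain ⟨h₂⟩ : Nonempty (IsInitial X₂) := by simpa [h₁] using hX.xor_of_isColimit hc
  exact (BinaryCofan.isColimit_iff_isIso_inl h₂ _).1 ⟨hc⟩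

theorem isIso_inl_or_isIso_inr (hX : IsCoprodIndecomposable X)
    (hc : IsColimit (BinaryCofan.mk i₁ i₂)) : IsIso i₁ ∨ IsIso i₂ := by
  by_cases h₁ : Nonempty (IsInitial X₁)
  · exact .inr ((BinaryCofan.isColimit_iff_isIso_inr h₁.some _).1 ⟨hc⟩)
  · exact .inl (hX.isIso_inl hc h₁)

end HasBinaryCoproducts

end IsCoprodIndecomposable

section FinitaryPreExtensive

variable [FinitaryPreExtensive C] {X Y Z : C}

theorem nonempty_isColimit_pullback_fst_coprod (f : X ⟶ Y ⨿ Z) :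
    Nonempty (IsColimit
      (BinaryCofan.mk (pullback.fst f coprod.inl) (pullback.fst f coprod.inr))) := by
  have isPullback_inl := IsPullback.of_hasPullback f coprod.inl
  have isPullback_inr := IsPullback.of_hasPullback f coprod.inr
  refine FinitaryPreExtensive.universal' _ (coprodIsCoprod Y Z) (BinaryCofan.mk _ _)
    (mapPair (pullback.snd f coprod.inl) (pullback.snd f coprod.inr)) f ?_
    (.of_discrete _) ?_
  · ext ⟨⟨⟩⟩
    · exact isPullback_inl.w.symm
    · exact isPullback_inr.w.symm
  · rintro ⟨⟨⟩⟩
    · exact isPullback_inl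
    · exact isPullback_inr

namespace IsCoprodIndecomposable

theorem comp_inl_injective (hX : IsCoprodIndecomposable X) :
    Function.Injective (fun a : X ⟶ Y ↦ a ≫ (coprod.inl : Y ⟶ Y ⨿ Z)) := by
  intro a b (hab : a ≫ coprod.inl = b ≫ coprod.inl)
  -- `a` and `b` give two sections of the projection `p`, which is an isomorphism.
  let p : pullback (a ≫ (coprod.inl : Y ⟶ Y ⨿ Z)) coprod.inl ⟶ X := pullback.fst _ _
  let s := pullback.lift (𝟙 X) a (Category.id_comp (a ≫ (coprod.inl : Y ⟶ Y ⨿ Z)))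
  let t := pullback.lift (𝟙 X) b ((Category.id_comp _).trans hab)
  obtain ⟨hc⟩ := nonempty_isColimit_pullback_fst_coprod (a ≫ (coprod.inl : Y ⟶ Y ⨿ Z))
  have : IsIso p := hX.isIso_inl hc fun ⟨h⟩ ↦ hX.not_isInitial ⟨h.ofStrict s⟩
  have hst : s = t := (cancel_mono p).1 <|
    (pullback.lift_fst _ _ _).trans (pullback.lift_fst _ _ _).symm
  calc
    a = s ≫ pullback.snd _ _ := (pullback.lift_snd _ _ _).symm
    _ = t ≫ pullback.snd _ _ := by rw [hst]
    _ = b := pullback.lift_snd _ _ _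

theorem comp_inr_injective (hX : IsCoprodIndecomposable X) :
    Function.Injective (fun b : X ⟶ Z ↦ b ≫ (coprod.inr : Z ⟶ Y ⨿ Z)) := by
  intro a b (hab : a ≫ coprod.inr = b ≫ coprod.inr)
  apply hX.comp_inl_injective (Z := Y)
  simpa [coprod.inr_desc] using congrArg (· ≫ (coprod.braiding Y Z).hom) hab

theorem comp_inl_ne_comp_inr (hX : IsCoprodIndecomposable X) (a : X ⟶ Y) (b : X ⟶ Z) :
    a ≫ (coprod.inl : Y ⟶ Y ⨿ Z) ≠ b ≫ coprod.inr := by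
  intro hab
  obtain ⟨hc⟩ := nonempty_isColimit_pullback_fst_coprod (a ≫ (coprod.inl : Y ⟶ Y ⨿ Z))
  rcases hX.xor_of_isColimit hc with ⟨-, hQ⟩ | ⟨-, hP⟩
  · obtain ⟨hQ⟩ := not_not.1 hQ
    exact hX.not_isInitial ⟨hQ.ofStrict (pullback.lift (𝟙 X) b ((Category.id_comp _).trans hab))⟩
  · obtain ⟨hP⟩ := not_not.1 hP
    exact hX.not_isInitial ⟨hP.ofStrict (pullback.lift (𝟙 X) a (Category.id_comp _))⟩

theorem exists_comp_inl_eq_or_exists_comp_inr_eq (hX : IsCoprodIndecomposable X)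
    (f : X ⟶ Y ⨿ Z) :
    (∃ a : X ⟶ Y, a ≫ coprod.inl = f) ∨ ∃ b : X ⟶ Z, b ≫ coprod.inr = f := by
  obtain ⟨hc⟩ := nonempty_isColimit_pullback_fst_coprod f
  rcases hX.isIso_inl_or_isIso_inr hc with _ | _
  · exact .inl ⟨inv (pullback.fst f coprod.inl) ≫ pullback.snd f coprod.inl, by
      rw [Category.assoc, ← pullback.condition, IsIso.inv_hom_id_assoc]⟩
  · exact .inr ⟨inv (pullback.fst f coprod.inr) ≫ pullback.snd f coprod.inr, by
      rw [Category.assoc, ← pullback.condition, IsIso.inv_hom_id_assoc]⟩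

theorem preservesColimit_empty_coyoneda (hX : IsCoprodIndecomposable X) :
    PreservesColimit (Functor.empty.{0} C) (coyoneda.obj (Opposite.op X)) :=
  (preservesColimit_empty_coyoneda_iff X initialIsInitial).2
    ⟨fun f ↦ hX.not_isInitial ⟨initialIsInitial.ofStrict f⟩⟩

theorem preservesColimit_pair_coyoneda (hX : IsCoprodIndecomposable X) (Y Z : C) :
    PreservesColimit (pair Y Z) (coyoneda.obj (Opposite.op X)) := by
  refine (preservesColimit_pair_coyoneda_iff X (coprodIsCoprod Y Z)).2
    ⟨hX.comp_inl_injective, hX.comp_inr_injective, ?_, ?_⟩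
  · rw [Set.disjoint_left]
    rintro _ ⟨a, rfl⟩ ⟨b, hb⟩
    exact hX.comp_inl_ne_comp_inr a b hb.symm
  · rw [codisjoint_iff_le_sup]
    exact fun f _ ↦ hX.exists_comp_inl_eq_or_exists_comp_inr_eq f

end IsCoprodIndecomposable

end FinitaryPreExtensive

section Disjoint

variable [HasBinaryCoproducts C] [HasPullbacksOfInclusions C] [BinaryCoproductsDisjoint C]
  [HasStrictInitialObjects C]

theorem nonempty_isInitial_of_comp_inl_eq_comp_inr {W Y Z : C} (f : W ⟶ Y) (g : W ⟶ Z)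
    (h : f ≫ (coprod.inl : Y ⟶ Y ⨿ Z) = g ≫ coprod.inr) : Nonempty (IsInitial W) :=
  ⟨.ofStrict (pullback.lift f g h) .ofBinaryCoproductDisjoint⟩

theorem isCoprodIndecomposable_of_preservesColimit {X : C}
    [PreservesColimit (Functor.empty.{0} C) (coyoneda.obj (Opposite.op X))]
    [∀ Y Z : C, PreservesColimit (pair Y Z) (coyoneda.obj (Opposite.op X))] :
    IsCoprodIndecomposable X := by
  intro X₁ X₂ e
  have not_both_isInitial : ¬ (Nonempty (IsInitial X₁) ∧ Nonempty (IsInitial X₂)) := by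
    rintro ⟨⟨h₁⟩, ⟨h₂⟩⟩
    have := (preservesColimit_empty_coyoneda_iff X h₁).1 inferInstance
    exact this.false (e.hom ≫ coprod.desc (𝟙 X₁) (h₂.to X₁))
  have isInitial_or : Nonempty (IsInitial X₁) ∨ Nonempty (IsInitial X₂) := by
    obtain ⟨-, -, hcompl⟩ :=
      (preservesColimit_pair_coyoneda_iff X (coprodIsCoprod X₁ X₂)).1 inferInstance
    rcases Set.eq_univ_iff_forall.1 hcompl.sup_eq_top e.hom with ⟨g, hg⟩ | ⟨g, hg⟩
    · exact .inr (nonempty_isInitial_of_comp_inl_eq_comp_inr (coprod.inr ≫ e.inv ≫ g) (𝟙 X₂)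
        (by simp [hg]))
    · exact .inl (nonempty_isInitial_of_comp_inl_eq_comp_inr (𝟙 X₁) (coprod.inl ≫ e.inv ≫ g)
        (by simp [hg]))
  rw [xor_not_not, xor_iff_or_and_not_and]
  exact ⟨isInitial_or, not_both_isInitial⟩

end Disjoint

/-- In a finitary extensive category, `Hom(X, -)` preserves finite coproducts iff in every
binary coproduct decomposition of `X` exactly one of the two summands is not initial. -/
theorem connected_iff_exactly_one_summand_not_initial {C : Type u} [Category.{v} C]
    [FinitaryExtensive C] (X : C) :
    (∀ (J : Type) [Finite J],
        PreservesColimitsOfShape (Discrete J) (coyoneda.obj (Opposite.op X))) ↔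
      ∀ (X₁ X₂ : C), (X ≅ X₁ ⨿ X₂) →
        Xor' (¬ Nonempty (IsInitial X₁)) (¬ Nonempty (IsInitial X₂)) := by
  rw [forall_finite_preservesColimitsOfShape_discrete_iff]
  constructor
  · rintro ⟨_, _⟩
    exact isCoprodIndecomposable_of_preservesColimit
  · intro (hX : IsCoprodIndecomposable X)
    exact ⟨hX.preservesColimit_empty_coyoneda, hX.preservesColimit_pair_coyoneda⟩
end
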